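/- For τ ∈ (0,1) and 0 < ε < (1/2)·min(τ,1-τ), with d₁₀ = (τ+ε)/(τ+(2q-1)ε) and d₀₀ = (1-τ-ε)/(1-τ-(2q-1)ε) at the capacity-achieving q, we have τ·lg d₁₀ + (1-τ)·lg d₀₀ ≥ C_{τ,ε} - 3ε²/(τ(1-τ)) ≥ -5·C_{τ,ε}. -/

import Mathlib

noncomputable def binEntropy (x : ℝ) : ℝ :=
  -(x * Real.logb 2 x) - (1 - x) * Real.logb 2 (1 - x)

noncomputable def mutualInfo (τ ε q : ℝ) : ℝ :=
  binEntropy ((1 - q) * (τ - ε) + q * (τ + ε))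
    - (1 - q) * binEntropy (τ - ε) - q * binEntropy (τ + ε)

noncomputable def capacity (τ ε : ℝ) : ℝ :=
  sSup {y | ∃ q ∈ Set.Icc (0 : ℝ) 1, y = mutualInfo τ ε q}

/-!
Let `m` be the probability of answer `1` at the optimal input distribution `q`, and write
`D(p ‖ r)` for the relative entropy of Bernoulli distributions. The derivative of the mutual
information at `q` is `D(τ + ε ‖ m) - D(τ - ε ‖ m)`, so both divergences agree with the capacity
`C`. Comparing them by the three-point identity with third point `τ + ε` shows that the left-hand
side of the first inequality is exactly `C - D(τ - ε ‖ τ + ε) / 2`, and the first terms of the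
series of `log ((1 + x) / (1 - x))` bound that divergence by `6 ε² / (τ (1 - τ))`. Conversely, `C`
is at least the mutual information at `q = 1 / 2`, namely `(D(τ - ε ‖ τ) + D(τ + ε ‖ τ)) / 2`, which
dominates `ε² / (2 ln 2 · τ (1 - τ))` because `x² ≤ (1 + x) log (1 + x) + (1 - x) log (1 - x)`.
-/

/-- The relative entropy, in bits, of the Bernoulli distribution with parameter `p` with respect to
the one with parameter `r`, used to express the mutual information and its derivative. It has this
meaning for `p ∈ [0, 1]` and `r ∈ (0, 1)`; the junk value `Real.logb 2 0 = 0` is harmless at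
`p = 0` and `p = 1`, where it is multiplied by `0`. -/
noncomputable def binRelEntropy (p r : ℝ) : ℝ :=
  p * Real.logb 2 (p / r) + (1 - p) * Real.logb 2 ((1 - p) / (1 - r))

/-- The probability of output `1` for the binary channel behind `mutualInfo`, which outputs `1` with
probability `τ + ε` on input `1` and `τ - ε` on input `0`, when the input is `1` with probability
`q`. It is the denominator of `d₁₀`, and `1 - outputProb τ ε q` is that of `d₀₀`. -/
noncomputable def outputProb (τ ε q : ℝ) : ℝ :=
  τ + (2 * q - 1) * ε

section Logarithm

variable {s δ x : ℝ}

lemma one_add_div_div_one_sub_div (hs : s ≠ 0) :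
    (1 + δ / s) / (1 - δ / s) = (s + δ) / (s - δ) := by
  rw [one_add_div hs, one_sub_div hs, div_div_div_cancel_right₀ hs]

lemma two_mul_div_le_log_add_div_sub (hδ : 0 ≤ δ) (hδs : δ < s) :
    2 * δ / s ≤ Real.log ((s + δ) / (s - δ)) := by
  have hs : 0 < s := hδ.trans_lt hδs
  have hseries : δ / s ≤ 1 / 2 * Real.log ((s + δ) / (s - δ)) := by
    simpa [one_add_div_div_one_sub_div hs.ne'] using
      Real.sum_range_le_log_div (div_nonneg hδ hs.le) ((div_lt_one hs).2 hδs) 1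
  rw [mul_div_assoc]
  linarith

lemma log_add_div_sub_le (hδ : 0 ≤ δ) (hδs : δ < s) :
    Real.log ((s + δ) / (s - δ)) ≤ 2 * s * δ / ((s + δ) * (s - δ)) := by
  have hs : 0 < s := hδ.trans_lt hδs
  have hseries : 1 / 2 * Real.log ((s + δ) / (s - δ)) ≤ δ / s / (1 - (δ / s) ^ 2) := by
    simpa [one_add_div_div_one_sub_div hs.ne'] using
      Real.log_div_le_sum_range_add (div_nonneg hδ hs.le) ((div_lt_one hs).2 hδs) 0
  have hremainder : δ / s / (1 - (δ / s) ^ 2) = s * δ / ((s + δ) * (s - δ)) := by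
    rw [show 1 - (δ / s) ^ 2 = (s + δ) * (s - δ) / s ^ 2 by field_simp; ring]
    field_simp
  rw [mul_assoc, mul_div_assoc]
  linarith

lemma sq_le_one_add_mul_log_add_one_sub_mul_log (hx : x ∈ Set.Icc (0 : ℝ) 1) :
    x ^ 2 ≤ (1 + x) * Real.log (1 + x) + (1 - x) * Real.log (1 - x) := by
  let f : ℝ → ℝ := fun t ↦
    (1 + t) * Real.log (1 + t) + (1 - t) * Real.log (1 - t) - t ^ 2
  have hcont : Continuous f :=
    ((Real.continuous_mul_log.comp (continuous_const.add continuous_id)).add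
      (Real.continuous_mul_log.comp (continuous_const.sub continuous_id))).sub (continuous_pow 2)
  have hderiv : ∀ t ∈ Set.Ioo (0 : ℝ) 1,
      HasDerivAt f (Real.log (1 + t) - Real.log (1 - t) - 2 * t) t := by
    intro t ht
    have hplus := (Real.hasDerivAt_mul_log (x := 1 + t) (by linarith [ht.1])).comp t
      ((hasDerivAt_id t).const_add 1)
    have hminus := (Real.hasDerivAt_mul_log (x := 1 - t) (by linarith [ht.2])).comp t
      ((hasDerivAt_id t).const_sub 1)
    exact ((hplus.add hminus).sub (hasDerivAt_pow 2 t)).congr_deriv (by norm_num; ring)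
  have hmono : MonotoneOn f (Set.Icc 0 1) := by
    refine monotoneOn_of_hasDerivWithinAt_nonneg (convex_Icc 0 1) hcont.continuousOn
      (fun t ht ↦ (hderiv t (by simpa using ht)).hasDerivWithinAt) fun t ht ↦ ?_
    rw [interior_Icc] at ht
    have hlog := two_mul_div_le_log_add_div_sub ht.1.le ht.2
    rw [Real.log_div (by linarith [ht.1]) (by linarith [ht.2])] at hlog
    linarith
  have hf0 : f 0 = 0 := by simp [f]
  linarith [hmono (Set.left_mem_Icc.2 zero_le_one) hx hx.1]

lemma sq_div_le_add_mul_log_add_sub_mul_log (hs : 0 < s) (hδ : 0 ≤ δ) (hδs : δ ≤ s) :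
    δ ^ 2 / s ≤ (s + δ) * Real.log ((s + δ) / s) + (s - δ) * Real.log ((s - δ) / s) := by
  have hunit := sq_le_one_add_mul_log_add_one_sub_mul_log
    ⟨div_nonneg hδ hs.le, (div_le_one hs).2 hδs⟩
  calc δ ^ 2 / s = s * (δ / s) ^ 2 := by field_simp
    _ ≤ s * _ := mul_le_mul_of_nonneg_left hunit hs.le
    _ = _ := by
      rw [add_div, sub_div, div_self hs.ne']
      linear_combination (Real.log (1 + δ / s) - Real.log (1 - δ / s)) * mul_div_cancel₀ δ hs.ne'

lemma mul_logb_div {b p r : ℝ} (hr : r ≠ 0) :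
    p * Real.logb b (p / r) = p * Real.logb b p - p * Real.logb b r := by
  rcases eq_or_ne p 0 with rfl | hp
  · simp
  · rw [Real.logb_div hp hr, mul_sub]

end Logarithm

section RelativeEntropy

variable {a b p r τ ε : ℝ}

lemma binRelEntropy_eq_neg_binEntropy_sub (hr0 : r ≠ 0) (hr1 : r ≠ 1) :
    binRelEntropy p r =
      -binEntropy p - p * Real.logb 2 r - (1 - p) * Real.logb 2 (1 - r) := by
  rw [binRelEntropy, binEntropy, mul_logb_div hr0, mul_logb_div (sub_ne_zero.2 hr1.symm)]
  ring

lemma binRelEntropy_three_point (hb0 : b ≠ 0) (hb1 : b ≠ 1) (hr0 : r ≠ 0) (hr1 : r ≠ 1) :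
    binRelEntropy a r = binRelEntropy a b + binRelEntropy b r
      - (b - a) * (Real.logb 2 (b / r) - Real.logb 2 ((1 - b) / (1 - r))) := by
  have hb1' := sub_ne_zero.2 hb1.symm
  have hr1' := sub_ne_zero.2 hr1.symm
  rw [binRelEntropy_eq_neg_binEntropy_sub hr0 hr1, binRelEntropy_eq_neg_binEntropy_sub hb0 hb1,
    binRelEntropy, Real.logb_div hb0 hr0, Real.logb_div hb1' hr1', binEntropy]
  ring

lemma log_two_mul_binRelEntropy : Real.log 2 * binRelEntropy p r =
    p * Real.log (p / r) + (1 - p) * Real.log ((1 - p) / (1 - r)) := by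
  have := (Real.log_pos one_lt_two).ne'
  simp only [binRelEntropy, Real.logb]
  field_simp

lemma sq_div_le_binRelEntropy_sub_add_binRelEntropy_add (hτ : τ ∈ Set.Ioo (0 : ℝ) 1)
    (hε : 0 ≤ ε) (hετ : ε ≤ τ) (hετ' : ε ≤ 1 - τ) :
    ε ^ 2 / (τ * (1 - τ)) ≤
      Real.log 2 * (binRelEntropy (τ - ε) τ + binRelEntropy (τ + ε) τ) := by
  have hτ0 : 0 < τ := hτ.1
  have hτ1 : 0 < 1 - τ := sub_pos.2 hτ.2
  calc ε ^ 2 / (τ * (1 - τ)) = ε ^ 2 / τ + ε ^ 2 / (1 - τ) := by field_simp; ring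
    _ ≤ _ :=
        add_le_add (sq_div_le_add_mul_log_add_sub_mul_log hτ0 hε hετ)
          (sq_div_le_add_mul_log_add_sub_mul_log hτ1 hε hετ')
    _ = _ := by
      rw [mul_add, log_two_mul_binRelEntropy, log_two_mul_binRelEntropy,
        show 1 - (τ - ε) = 1 - τ + ε by ring, ← sub_sub]
      ring

lemma log_two_mul_binRelEntropy_sub_add_le (hε : 0 ≤ ε) (hτ : 0 < τ) (hετ : ε ≤ τ)
    (hετ' : τ + ε < 1) :
    Real.log 2 * binRelEntropy (τ - ε) (τ + ε) ≤ 2 * ε ^ 2 * (1 / τ + 1 / (1 - τ - ε)) := by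
  have hσ : 0 < 1 - τ - ε := by linarith
  have hone : (τ - ε) * Real.log ((τ - ε) / (τ + ε)) ≤ (τ - ε) * -(2 * ε / τ) := by
    rcases hετ.eq_or_lt with rfl | hlt
    · simp
    · rw [← inv_div, Real.log_inv]
      exact mul_le_mul_of_nonneg_left (neg_le_neg (two_mul_div_le_log_add_div_sub hε hlt))
        (sub_nonneg.2 hετ)
  have hzero : (1 - τ + ε) * Real.log ((1 - τ + ε) / (1 - τ - ε)) ≤
      (1 - τ + ε) * (2 * (1 - τ) * ε / ((1 - τ + ε) * (1 - τ - ε))) :=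
    mul_le_mul_of_nonneg_left (log_add_div_sub_le hε (by linarith)) (by linarith)
  have hσ' : 0 < 1 - τ + ε := by linarith
  calc Real.log 2 * binRelEntropy (τ - ε) (τ + ε)
      = (τ - ε) * Real.log ((τ - ε) / (τ + ε))
        + (1 - τ + ε) * Real.log ((1 - τ + ε) / (1 - τ - ε)) := by
        rw [log_two_mul_binRelEntropy, show 1 - (τ - ε) = 1 - τ + ε by ring, ← sub_sub]
    _ ≤ _ := add_le_add hone hzero
    _ = _ := by field_simp; ring

lemma binRelEntropy_sub_add_le (hε : 0 < ε) (hετ : ε ≤ τ) (hετ' : 2 * ε ≤ 1 - τ) :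
    binRelEntropy (τ - ε) (τ + ε) ≤ 6 * ε ^ 2 / (τ * (1 - τ)) := by
  have hτ0 : 0 < τ := hε.trans_le hετ
  have hτ1 : 0 < 1 - τ := by linarith
  have hinv : 1 / (1 - τ - ε) ≤ 2 / (1 - τ) := by
    rw [div_le_div_iff₀ (by linarith) hτ1]
    linarith
  have hlog : 2 / 3 ≤ Real.log 2 := by linarith [Real.log_two_gt_d9]
  have hnats : Real.log 2 * binRelEntropy (τ - ε) (τ + ε) ≤ 4 * ε ^ 2 / (τ * (1 - τ)) :=
    calc _ ≤ 2 * ε ^ 2 * (1 / τ + 1 / (1 - τ - ε)) :=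
          log_two_mul_binRelEntropy_sub_add_le hε.le hτ0 hετ (by linarith)
      _ ≤ 2 * ε ^ 2 * (2 / τ + 2 / (1 - τ)) := by gcongr; norm_num
      _ = 4 * ε ^ 2 / (τ * (1 - τ)) := by field_simp; ring
  refine le_of_mul_le_mul_left (hnats.trans ?_) (Real.log_pos one_lt_two)
  calc 4 * ε ^ 2 / (τ * (1 - τ)) = 2 / 3 * (6 * ε ^ 2 / (τ * (1 - τ))) := by ring
    _ ≤ _ := by gcongr

end RelativeEntropy

lemma hasDerivAt_binEntropy {p : ℝ} (hp0 : p ≠ 0) (hp1 : p ≠ 1) :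
    HasDerivAt binEntropy (Real.logb 2 (1 - p) - Real.logb 2 p) p := by
  have hnats : binEntropy = fun x ↦ Real.binEntropy x / Real.log 2 := by
    ext x
    rw [Real.binEntropy_eq_negMulLog_add_negMulLog_one_sub]
    simp only [binEntropy, Real.negMulLog, Real.logb]
    ring
  rw [hnats]
  exact ((Real.hasDerivAt_binEntropy hp0 hp1).div_const _).congr_deriv (sub_div _ _ _)

section Capacity

variable {τ ε q : ℝ}

lemma mix_eq_outputProb : (1 - q) * (τ - ε) + q * (τ + ε) = outputProb τ ε q := by
  rw [outputProb]
  ring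

lemma outputProb_mem_Ioo (hε : 0 < ε) (hετ : ε ≤ τ) (hετ' : ε ≤ 1 - τ)
    (hq : q ∈ Set.Ioo (0 : ℝ) 1) : outputProb τ ε q ∈ Set.Ioo (0 : ℝ) 1 := by
  have h0 := mul_pos hq.1 hε
  have h1 := mul_pos (sub_pos.2 hq.2) hε
  constructor <;> rw [outputProb] <;> linarith

lemma mutualInfo_eq_binRelEntropy (h0 : outputProb τ ε q ≠ 0) (h1 : outputProb τ ε q ≠ 1) :
    mutualInfo τ ε q = (1 - q) * binRelEntropy (τ - ε) (outputProb τ ε q)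
      + q * binRelEntropy (τ + ε) (outputProb τ ε q) := by
  rw [binRelEntropy_eq_neg_binEntropy_sub h0 h1, binRelEntropy_eq_neg_binEntropy_sub h0 h1,
    mutualInfo, mix_eq_outputProb]
  simp only [binEntropy, outputProb]
  ring

lemma hasDerivAt_mutualInfo (h0 : outputProb τ ε q ≠ 0) (h1 : outputProb τ ε q ≠ 1) :
    HasDerivAt (mutualInfo τ ε) (binRelEntropy (τ + ε) (outputProb τ ε q)
      - binRelEntropy (τ - ε) (outputProb τ ε q)) q := by
  have hcompl : HasDerivAt (fun z : ℝ ↦ 1 - z) (-1) q := (hasDerivAt_id q).const_sub 1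
  have hmix : HasDerivAt (fun z ↦ (1 - z) * (τ - ε) + z * (τ + ε)) (2 * ε) q :=
    ((hcompl.mul_const _).add ((hasDerivAt_id q).mul_const _)).congr_deriv (by ring)
  have hentropy := hasDerivAt_binEntropy h0 h1
  rw [← mix_eq_outputProb] at hentropy
  refine (((hentropy.comp q hmix).sub (hcompl.mul_const (binEntropy (τ - ε)))).sub
    ((hasDerivAt_id q).mul_const (binEntropy (τ + ε)))).congr_deriv ?_
  rw [mix_eq_outputProb, binRelEntropy_eq_neg_binEntropy_sub h0 h1,
    binRelEntropy_eq_neg_binEntropy_sub h0 h1]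
  ring

lemma mutualInfo_zero : mutualInfo τ ε 0 = 0 := by simp [mutualInfo]

lemma mutualInfo_one : mutualInfo τ ε 1 = 0 := by simp [mutualInfo]

lemma sq_div_le_mutualInfo_half (hτ : τ ∈ Set.Ioo (0 : ℝ) 1) (hε : 0 ≤ ε) (hετ : ε ≤ τ)
    (hετ' : ε ≤ 1 - τ) :
    ε ^ 2 / (2 * Real.log 2 * (τ * (1 - τ))) ≤ mutualInfo τ ε (1 / 2) := by
  have houtput : outputProb τ ε (1 / 2) = τ := by
    rw [outputProb]
    ring
  have hinfo := mutualInfo_eq_binRelEntropy (houtput.trans_ne hτ.1.ne') (houtput.trans_ne hτ.2.ne)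
  rw [houtput] at hinfo
  rw [mul_comm, ← div_div, div_le_iff₀ (by positivity), hinfo]
  linarith [sq_div_le_binRelEntropy_sub_add_binRelEntropy_add hτ hε hετ hετ']

lemma capacity_eq_mutualInfo (hq : q ∈ Set.Icc (0 : ℝ) 1)
    (hmax : IsMaxOn (mutualInfo τ ε) (Set.Icc 0 1) q) : capacity τ ε = mutualInfo τ ε q := by
  refine IsGreatest.csSup_eq ⟨⟨q, hq, rfl⟩, ?_⟩
  rintro _ ⟨x, hx, rfl⟩
  exact hmax hx

lemma sq_div_le_capacity (hτ : τ ∈ Set.Ioo (0 : ℝ) 1) (hε : 0 ≤ ε) (hετ : ε ≤ τ)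
    (hετ' : ε ≤ 1 - τ) (hq : q ∈ Set.Icc (0 : ℝ) 1)
    (hmax : IsMaxOn (mutualInfo τ ε) (Set.Icc 0 1) q) :
    ε ^ 2 / (2 * Real.log 2 * (τ * (1 - τ))) ≤ capacity τ ε := by
  rw [capacity_eq_mutualInfo hq hmax]
  exact (sq_div_le_mutualInfo_half hτ hε hετ hετ').trans (hmax ⟨by norm_num, by norm_num⟩)

lemma three_mul_sq_div_le_six_mul_capacity (hτ : τ ∈ Set.Ioo (0 : ℝ) 1) (hε : 0 ≤ ε) (hετ : ε ≤ τ)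
    (hετ' : ε ≤ 1 - τ) (hq : q ∈ Set.Icc (0 : ℝ) 1)
    (hmax : IsMaxOn (mutualInfo τ ε) (Set.Icc 0 1) q) :
    3 * ε ^ 2 / (τ * (1 - τ)) ≤ 6 * capacity τ ε := by
  have hvar : 0 < τ * (1 - τ) := mul_pos hτ.1 (sub_pos.2 hτ.2)
  have hcap := sq_div_le_capacity hτ hε hετ hετ' hq hmax
  have hcap0 : 0 ≤ capacity τ ε := le_trans (by positivity) hcap
  calc 3 * ε ^ 2 / (τ * (1 - τ))
      = 6 * Real.log 2 * (ε ^ 2 / (2 * Real.log 2 * (τ * (1 - τ)))) := by field_simp; ring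
    _ ≤ 6 * Real.log 2 * capacity τ ε := by gcongr
    _ ≤ 6 * 1 * capacity τ ε := by gcongr; linarith [Real.log_two_lt_d9]
    _ = 6 * capacity τ ε := by ring

lemma mem_Ioo_of_isMaxOn_mutualInfo (hε : 0 < ε) (hετ : ε ≤ τ) (hετ' : ε ≤ 1 - τ)
    (hq : q ∈ Set.Icc (0 : ℝ) 1) (hmax : IsMaxOn (mutualInfo τ ε) (Set.Icc 0 1) q) :
    q ∈ Set.Ioo (0 : ℝ) 1 := by
  have hτ0 : 0 < τ := hε.trans_le hετ
  have hτ1 : 0 < 1 - τ := hε.trans_le hετ'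
  have hpos : 0 < mutualInfo τ ε q := by
    rw [← capacity_eq_mutualInfo hq hmax]
    exact lt_of_lt_of_le (by positivity)
      (sq_div_le_capacity ⟨hτ0, sub_pos.1 hτ1⟩ hε.le hετ hετ' hq hmax)
  refine ⟨hq.1.lt_of_ne ?_, hq.2.lt_of_ne ?_⟩
  · rintro rfl
    exact hpos.ne' mutualInfo_zero
  · rintro rfl
    exact hpos.ne' mutualInfo_one

lemma binRelEntropy_add_eq_sub_of_isMaxOn (h0 : outputProb τ ε q ≠ 0) (h1 : outputProb τ ε q ≠ 1)
    (hq : q ∈ Set.Ioo (0 : ℝ) 1) (hmax : IsMaxOn (mutualInfo τ ε) (Set.Icc 0 1) q) :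
    binRelEntropy (τ + ε) (outputProb τ ε q) = binRelEntropy (τ - ε) (outputProb τ ε q) :=
  sub_eq_zero.1 ((hmax.isLocalMax (Icc_mem_nhds hq.1 hq.2)).hasDerivAt_eq_zero
    (hasDerivAt_mutualInfo h0 h1))

lemma capacity_eq_binRelEntropy_add (h0 : outputProb τ ε q ≠ 0) (h1 : outputProb τ ε q ≠ 1)
    (hq : q ∈ Set.Ioo (0 : ℝ) 1) (hmax : IsMaxOn (mutualInfo τ ε) (Set.Icc 0 1) q) :
    capacity τ ε = binRelEntropy (τ + ε) (outputProb τ ε q) := by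
  rw [capacity_eq_mutualInfo (Set.Ioo_subset_Icc_self hq) hmax, mutualInfo_eq_binRelEntropy h0 h1,
    ← binRelEntropy_add_eq_sub_of_isMaxOn h0 h1 hq hmax]
  ring

lemma logb_gain_eq_capacity_sub_binRelEntropy (hε : 0 < ε) (hετ : ε ≤ τ) (hετ' : ε < 1 - τ)
    (hq : q ∈ Set.Icc (0 : ℝ) 1) (hmax : IsMaxOn (mutualInfo τ ε) (Set.Icc 0 1) q) :
    τ * Real.logb 2 ((τ + ε) / outputProb τ ε q)
        + (1 - τ) * Real.logb 2 ((1 - (τ + ε)) / (1 - outputProb τ ε q)) =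
      capacity τ ε - binRelEntropy (τ - ε) (τ + ε) / 2 := by
  have hq' := mem_Ioo_of_isMaxOn_mutualInfo hε hετ hετ'.le hq hmax
  obtain ⟨hm0, hm1⟩ := outputProb_mem_Ioo hε hετ hετ'.le hq'
  have hkkt := binRelEntropy_add_eq_sub_of_isMaxOn hm0.ne' hm1.ne hq' hmax
  have hthree := binRelEntropy_three_point (a := τ - ε) (b := τ + ε)
    (by linarith) (by linarith) hm0.ne' hm1.ne
  rw [capacity_eq_binRelEntropy_add hm0.ne' hm1.ne hq' hmax, binRelEntropy]
  linarith

end Capacity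

theorem good_query_loss_bound_general (τ ε q : ℝ)
    (hε0 : 0 < ε) (hετ : ε ≤ τ) (hετ' : 2 * ε ≤ 1 - τ) (hq : q ∈ Set.Icc (0 : ℝ) 1)
    (hmax : ∀ x ∈ Set.Icc (0 : ℝ) 1, mutualInfo τ ε x ≤ mutualInfo τ ε q) :
    τ * Real.logb 2 ((τ + ε) / (τ + (2 * q - 1) * ε))
        + (1 - τ) * Real.logb 2 ((1 - τ - ε) / (1 - τ - (2 * q - 1) * ε)) ≥
      capacity τ ε - 3 * ε ^ 2 / (τ * (1 - τ)) ∧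
    capacity τ ε - 3 * ε ^ 2 / (τ * (1 - τ)) ≥ -5 * capacity τ ε := by
  have hτ : τ ∈ Set.Ioo (0 : ℝ) 1 := ⟨by linarith, by linarith⟩
  have hgain := logb_gain_eq_capacity_sub_binRelEntropy hε0 hετ (by linarith) hq hmax
  rw [outputProb, ← sub_sub, ← sub_sub] at hgain
  have hloss := binRelEntropy_sub_add_le hε0 hετ hετ'
  have hcap := three_mul_sq_div_le_six_mul_capacity hτ hε0.le hετ (by linarith) hq hmax
  refine ⟨?_, by linarith⟩
  rw [hgain, ge_iff_le]
  linarith [show 6 * ε ^ 2 / (τ * (1 - τ)) = 2 * (3 * ε ^ 2 / (τ * (1 - τ))) by ring]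

theorem good_query_loss_bound (τ ε q : ℝ)
    (hτ0 : 0 < τ) (hτ1 : τ < 1) (hε0 : 0 < ε) (hε : ε < (1/2) * min τ (1 - τ))
    (hq : q ∈ Set.Icc (0 : ℝ) 1)
    (hmax : ∀ x ∈ Set.Icc (0 : ℝ) 1, mutualInfo τ ε x ≤ mutualInfo τ ε q) :
    τ * Real.logb 2 ((τ + ε) / (τ + (2 * q - 1) * ε))
        + (1 - τ) * Real.logb 2 ((1 - τ - ε) / (1 - τ - (2 * q - 1) * ε)) ≥
      capacity τ ε - 3 * ε ^ 2 / (τ * (1 - τ)) ∧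
    capacity τ ε - 3 * ε ^ 2 / (τ * (1 - τ)) ≥ -5 * capacity τ ε :=
  good_query_loss_bound_general τ ε q hε0 (by linarith [min_le_left τ (1 - τ)])
    (by linarith [min_le_right τ (1 - τ)]) hq hmax
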